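/- arXiv:2510.27574 — 2 statements merged into one kernel-verified Lean document; each statement's English description precedes it below -/
import Mathlib

section
/- Let f_FR(n,k) denote the number of Fubini rankings with n competitors having exactly k lucky cars, with the conventions f_FR(0,0) = 1 and f_FR(0,k) = 0 for k ≥ 1. Then for all n ≥ 1 and k ≥ 1, f_FR(n,k) = k·( f_FR(n−1,k) + f_FR(n−1,k−1) ). -/
/-- A Fubini ranking with `n` competitors: entries are in `[n]` (represented by `Fin n`,
where `i : Fin n` stands for the rank `i.val + 1`), and for every rank `r` occurring among
the entries, the number of indices `j` whose entry is strictly smaller than `r` equals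
`r - 1` (i.e. `r.val` in the `Fin n` encoding). -/
def IsFubini {n : ℕ} (α : Fin n → Fin n) : Prop :=
  ∀ r : Fin n, (∃ i, α i = r) →
    (Finset.univ.filter (fun j => α j < r)).card = (r : ℕ)

/-- The set of lucky cars of `α`: car `i` is lucky iff it is the first occurrence of its
value, i.e. `α j ≠ α i` for all `j < i`. -/
def luckySet {n : ℕ} (α : Fin n → Fin n) : Finset (Fin n) :=
  Finset.univ.filter (fun i => ∀ j, j < i → α j ≠ α i)

/-- The number of lucky cars of `α`. -/
def lucky {n : ℕ} (α : Fin n → Fin n) : ℕ := (luckySet α).card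

instance {n : ℕ} : DecidablePred (IsFubini (n := n)) := fun α =>
  inferInstanceAs (Decidable (∀ r : Fin n, (∃ i, α i = r) →
    (Finset.univ.filter (fun j => α j < r)).card = (r : ℕ)))

/-- The number of Fubini rankings with `n` competitors having exactly `k` lucky cars.
(For `n = 0` this gives `fFR 0 0 = 1` and `fFR 0 k = 0` for `k ≥ 1`.) -/
noncomputable def fFR (n k : ℕ) : ℕ :=
  Nat.card {α : Fin n → Fin n // IsFubini α ∧ lucky α = k}

/-!
A Fubini ranking is determined by the weak ordering of the competitors that it induces, and its
lucky cars count the blocks of ties. Numbering the blocks `0, …, k - 1` in order turns it into a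
surjection `Fin n → Fin k`; the inverse sends a surjection to its competition ranking. For
surjections the recurrence is immediate: choose the value at `0`; the remaining values either still
cover `Fin k` or miss exactly the chosen value.
-/

open Function Finset

section WeakOrder

variable {ι β : Type*}

lemma card_filter_forall_lt_apply_ne [Fintype ι] [LinearOrder ι] [DecidableEq β] (f : ι → β)
    [DecidablePred fun i => ∀ j, j < i → f j ≠ f i] :
    #{i | ∀ j, j < i → f j ≠ f i} = #(univ.image f) := by
  refine card_bij (fun i _ => f i) (fun i _ => mem_image_of_mem f (mem_univ i)) ?_ ?_
  · intro i hi j hj hij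
    simp only [mem_filter_univ] at hi hj
    exact le_antisymm (not_lt.1 fun h => hi j h hij.symm) (not_lt.1 fun h => hj i h hij)
  · intro b hb
    obtain ⟨i, -, rfl⟩ := mem_image.1 hb
    obtain ⟨m, hm, hmin⟩ := exists_minimal_of_wellFoundedLT (fun j => f j = f i) ⟨i, rfl⟩
    refine ⟨m, (mem_filter_univ m).2 fun j hjm hj => ?_, hm⟩
    exact hjm.not_ge (hmin (hj.trans hm) hjm.le)

lemma le_of_surjective_of_lt_imp_lt [LinearOrder β] [WellFoundedLT β] {f g : ι → β}
    (hf : Surjective f) (hfg : ∀ i j, f i < f j → g i < g j) : f ≤ g := by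
  intro i
  induction hi : f i using WellFoundedLT.induction generalizing i with
  | ind b ih =>
    subst hi
    by_contra! hlt
    obtain ⟨j, hj⟩ := hf (g i)
    have hji : f j < f i := hj.trans_lt hlt
    exact (hfg j i hji).not_ge (hj ▸ ih (f j) hji j rfl)

lemma exists_surjective_fin_lt_iff_lt [Fintype ι] [LinearOrder β] {k : ℕ} (f : ι → β)
    (hk : #(univ.image f) = k) :
    ∃ g : ι → Fin k, Surjective g ∧ ∀ i j, g i < g j ↔ f i < f j := by
  let e : Fin k ≃o univ.image f := orderIsoOfFin _ hk
  have hmem (i : ι) : f i ∈ univ.image f := mem_image_of_mem f (mem_univ i)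
  refine ⟨fun i => e.symm ⟨f i, hmem i⟩, fun v => ?_, fun i j => e.symm.lt_iff_lt⟩
  obtain ⟨i, -, hi⟩ := mem_image.1 (e v).2
  exact ⟨i, e.symm_apply_eq.2 (Subtype.ext hi)⟩

end WeakOrder

section CompetitionRank

variable {n : ℕ} {β γ : Type*} [LinearOrder β] [LinearOrder γ]

/-- The standard competition ranking of `n` competitors with scores `f`, lower being better: the
rank of `i` is the number of competitors strictly ahead of `i`. Ranks start at `0`, as
in the encoding of `IsFubini`. -/
def competitionRank (f : Fin n → β) (i : Fin n) : Fin n where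
  val := #{j | f j < f i}
  isLt := (card_lt_univ_of_notMem (by simp : i ∉ _)).trans_eq (Fintype.card_fin n)

lemma competitionRank_lt_competitionRank_iff {f : Fin n → β} {i j : Fin n} :
    competitionRank f i < competitionRank f j ↔ f i < f j := by
  refine ⟨fun h => ?_, fun h => ?_⟩
  · contrapose! h
    have hsub : ({l | f l < f j} : Finset (Fin n)) ⊆ ({l | f l < f i} : Finset (Fin n)) :=
      monotone_filter_right _ fun l _ hl => hl.trans_le h
    exact card_le_card hsub
  · have hsub : ({l | f l < f i} : Finset (Fin n)) ⊆ ({l | f l < f j} : Finset (Fin n)) :=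
      monotone_filter_right _ fun l _ hl => hl.trans h
    exact card_lt_card ((ssubset_iff_of_subset hsub).2 ⟨i, by simpa using h, by simp⟩)

lemma competitionRank_inj {f : Fin n → β} {i j : Fin n} :
    competitionRank f i = competitionRank f j ↔ f i = f j := by
  simp only [le_antisymm_iff, ← not_lt, competitionRank_lt_competitionRank_iff]

lemma competitionRank_eq_iff {f : Fin n → β} {g : Fin n → γ} :
    competitionRank f = competitionRank g ↔ ∀ i j, f i < f j ↔ g i < g j := by
  refine ⟨fun h i j => ?_, fun h => ?_⟩
  · rw [← competitionRank_lt_competitionRank_iff, h, competitionRank_lt_competitionRank_iff]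
  · ext i
    simp only [competitionRank, h]

lemma isFubini_iff_competitionRank_eq {α : Fin n → Fin n} :
    IsFubini α ↔ competitionRank α = α := by
  simp only [IsFubini, forall_exists_index, forall_apply_eq_imp_iff, funext_iff]
  exact forall_congr' fun i => (Fin.ext_iff (a := competitionRank α i)).symm

lemma isFubini_competitionRank (f : Fin n → β) : IsFubini (competitionRank f) :=
  isFubini_iff_competitionRank_eq.2 <|
    competitionRank_eq_iff.2 fun _ _ => competitionRank_lt_competitionRank_iff

lemma lucky_eq_card_image (α : Fin n → Fin n) : lucky α = #(univ.image α) :=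
  card_filter_forall_lt_apply_ne α

lemma lucky_competitionRank (f : Fin n → β) : lucky (competitionRank f) = #(univ.image f) := by
  simp only [lucky, luckySet, ne_eq, competitionRank_inj, ← card_filter_forall_lt_apply_ne]

lemma bijOn_competitionRank (n k : ℕ) :
    Set.BijOn competitionRank {f : Fin n → Fin k | Surjective f}
      {α | IsFubini α ∧ lucky α = k} := by
  refine ⟨?mapsTo, ?injOn, ?surjOn⟩
  case mapsTo =>
    intro f hf
    have hlucky : lucky (competitionRank f) = k := by
      rw [lucky_competitionRank, image_univ_of_surjective hf, card_fin]
    exact ⟨isFubini_competitionRank f, hlucky⟩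
  case injOn =>
    intro f hf g hg hfg
    have hlt := competitionRank_eq_iff.1 hfg
    exact le_antisymm (le_of_surjective_of_lt_imp_lt hf fun i j => (hlt i j).1)
      (le_of_surjective_of_lt_imp_lt hg fun i j => (hlt i j).2)
  case surjOn =>
    rintro α ⟨hα, hk⟩
    obtain ⟨f, hf, hlt⟩ := exists_surjective_fin_lt_iff_lt α (lucky_eq_card_image α ▸ hk)
    exact ⟨f, hf, (competitionRank_eq_iff.2 hlt).trans (isFubini_iff_competitionRank_eq.1 hα)⟩

lemma fFR_eq_card_surjective (n k : ℕ) :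
    fFR n k = Nat.card {f : Fin n → Fin k // Surjective f} :=
  (Nat.card_congr (bijOn_competitionRank n k).equiv).symm

end CompetitionRank

section Surjections

variable {α β γ : Type*}

lemma insert_eq_univ_iff {b : β} {s : Set β} : insert b s = .univ ↔ s = .univ ∨ s = {b}ᶜ := by
  grind

lemma surjective_cons_iff {n : ℕ} {b : β} {g : Fin n → β} :
    Surjective (Fin.cons b g : Fin (n + 1) → β) ↔ Surjective g ∨ Set.range g = {b}ᶜ := by
  rw [← Set.range_eq_univ, Fin.range_cons, insert_eq_univ_iff, Set.range_eq_univ]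

lemma card_subtype_range_eq_range {e : γ → β} (he : Injective e) :
    Nat.card {g : α → β // Set.range g = Set.range e} =
      Nat.card {h : α → γ // Surjective h} := by
  have hbij : Set.BijOn (e ∘ ·) {h : α → γ | Surjective h} {g | Set.range g = Set.range e} := by
    refine ⟨fun h hh => hh.range_comp e, he.comp_left.injOn, fun g hg => ?_⟩
    obtain ⟨h, rfl⟩ := Set.range_subset_range_iff_exists_comp.1 (Eq.subset hg)
    refine ⟨h, Set.range_eq_univ.1 (he.image_injective ?_), rfl⟩
    rw [← Set.range_comp, Set.image_univ, hg]
  exact (Nat.card_congr hbij.equiv).symm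

lemma card_surjective_or_range_eq_compl_singleton [Finite α] {m : ℕ} (b : Fin (m + 1)) :
    Nat.card {g : α → Fin (m + 1) // Surjective g ∨ Set.range g = {b}ᶜ} =
      Nat.card {g : α → Fin (m + 1) // Surjective g} +
        Nat.card {h : α → Fin m // Surjective h} := by
  classical
  have hdisj : Disjoint (fun g : α → Fin (m + 1) => Surjective g) (Set.range · = {b}ᶜ) :=
    Pi.disjoint_iff.2 fun g => Prop.disjoint_iff.2 fun ⟨hg, hb⟩ =>
      (hb ▸ hg b : b ∈ ({b}ᶜ : Set _)) rfl
  rw [Nat.card_congr (subtypeOrEquiv _ _ hdisj), Nat.card_sum, ← Fin.range_succAbove,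
    card_subtype_range_eq_range Fin.succAbove_right_injective]

lemma card_surjective_succ (n m : ℕ) :
    Nat.card {f : Fin (n + 1) → Fin (m + 1) // Surjective f} =
      (m + 1) * (Nat.card {f : Fin n → Fin (m + 1) // Surjective f} +
        Nat.card {f : Fin n → Fin m // Surjective f}) := by
  let headTail : {f : Fin (n + 1) → Fin (m + 1) // Surjective f} ≃
      Σ b : Fin (m + 1), {g : Fin n → Fin (m + 1) // Surjective g ∨ Set.range g = {b}ᶜ} :=
    ((Fin.consEquiv fun _ => Fin (m + 1)).subtypeEquiv
      fun _ => surjective_cons_iff.symm).symm.trans <|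
        Equiv.subtypeProdEquivSigmaSubtype fun b g => Surjective g ∨ Set.range g = {b}ᶜ
  rw [Nat.card_congr headTail, Nat.card_sigma]
  simp only [card_surjective_or_range_eq_compl_singleton, sum_const, card_fin, smul_eq_mul]

end Surjections

/-- For `n, k ≥ 1`, `f_FR(n,k) = k·(f_FR(n−1,k) + f_FR(n−1,k−1))`. -/
theorem fFR_recurrence (n k : ℕ) (hn : 1 ≤ n) (hk : 1 ≤ k) :
    fFR n k = k * (fFR (n - 1) k + fFR (n - 1) (k - 1)) := by
  obtain ⟨n, rfl⟩ := Nat.exists_eq_add_of_le' hn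
  obtain ⟨k, rfl⟩ := Nat.exists_eq_add_of_le' hk
  simp only [Nat.add_sub_cancel, fFR_eq_card_surjective, card_surjective_succ]
end

section
/- For every n ≥ 1, the total number of lucky cars over all weakly increasing Fubini rankings with n competitors satisfies 2·∑_{α ∈ FR_n^↑} lucky(α) = (n+1)·2^{n−1}; equivalently, since |FR_n^↑| = 2^{n−1}, the expected number of lucky cars of a uniformly random weakly increasing Fubini ranking with n competitors is (n+1)/2. -/
instance {n : ℕ} : DecidablePred (Monotone : (Fin n → Fin n) → Prop) := fun f =>
  inferInstanceAs (Decidable (∀ a b : Fin n, a ≤ b → f a ≤ f b))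

/-!
In a weakly increasing Fubini ranking `α` the competitors ranked before `α i` form an initial
segment of length `α i`, so `α j < α i ↔ j < α i`. Hence `α` is deflationary and idempotent, its
lucky cars are its fixed points, and `α i` is the last fixed point at or before `i`. Thus `α` is
determined by its set of lucky cars, which can be any set containing the first car. Among
these sets, reflecting each one (complementing it away from the first car) pairs sets whose
sizes add up to `n + 1`.
-/

lemma finset_eq_of_isLowerSet_of_card_eq {ι : Type*} [LinearOrder ι] {s t : Finset ι}
    (hs : IsLowerSet (s : Set ι)) (ht : IsLowerSet (t : Set ι)) (hcard : s.card = t.card) :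
    s = t := by
  rcases hs.total ht with hst | hts
  · exact Finset.eq_of_subset_of_card_le (Finset.coe_subset.mp hst) hcard.ge
  · exact (Finset.eq_of_subset_of_card_le (Finset.coe_subset.mp hts) hcard.le).symm

section IntervalSum

variable {ι : Type*} [DecidableEq ι] {s t u : Finset ι}

/-- The reflection of the interval `[s, t]` of finite sets: it complements the part of `u` lying
in `t \ s`. It is an involution only on sets between `s` and `t`. -/
def intervalCompl (s t u : Finset ι) : Finset ι := s ∪ t \ u

lemma intervalCompl_mem_Icc (hst : s ⊆ t) (u : Finset ι) :
    intervalCompl s t u ∈ Finset.Icc s t :=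
  Finset.mem_Icc.mpr
    ⟨Finset.subset_union_left, Finset.union_subset hst Finset.sdiff_subset⟩

lemma intervalCompl_intervalCompl (hu : u ∈ Finset.Icc s t) :
    intervalCompl s t (intervalCompl s t u) = u := by
  obtain ⟨hsu, hut⟩ := Finset.mem_Icc.mp hu
  ext x
  have := @hsu x
  have := @hut x
  simp only [intervalCompl, Finset.mem_union, Finset.mem_sdiff]
  tauto

lemma card_add_card_intervalCompl (hu : u ∈ Finset.Icc s t) :
    u.card + (intervalCompl s t u).card = s.card + t.card := by
  obtain ⟨hsu, hut⟩ := Finset.mem_Icc.mp hu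
  have hdisj : Disjoint s (t \ u) := Finset.disjoint_sdiff.mono_left hsu
  rw [intervalCompl, Finset.card_union_of_disjoint hdisj, add_left_comm, add_comm u.card,
    Finset.card_sdiff_add_card_eq_card hut]

lemma sum_intervalCompl {M : Type*} [AddCommMonoid M] (hst : s ⊆ t) (f : Finset ι → M) :
    ∑ u ∈ Finset.Icc s t, f (intervalCompl s t u) = ∑ u ∈ Finset.Icc s t, f u :=
  Finset.sum_nbij' (intervalCompl s t) (intervalCompl s t)
    (fun _ _ => intervalCompl_mem_Icc hst _) (fun _ _ => intervalCompl_mem_Icc hst _)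
    (fun _ => intervalCompl_intervalCompl) (fun _ => intervalCompl_intervalCompl)
    (fun _ _ => rfl)

lemma two_mul_sum_card_Icc (hst : s ⊆ t) :
    2 * ∑ u ∈ Finset.Icc s t, u.card = (s.card + t.card) * 2 ^ (t.card - s.card) := by
  calc 2 * ∑ u ∈ Finset.Icc s t, u.card
      = ∑ u ∈ Finset.Icc s t, (u.card + (intervalCompl s t u).card) := by
        rw [Finset.sum_add_distrib, sum_intervalCompl hst, two_mul]
    _ = ∑ _u ∈ Finset.Icc s t, (s.card + t.card) :=
        Finset.sum_congr rfl fun _ => card_add_card_intervalCompl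
    _ = (s.card + t.card) * 2 ^ (t.card - s.card) := by
        rw [Finset.sum_const, Finset.card_Icc_finset hst, smul_eq_mul, mul_comm]

end IntervalSum

section FloorIn

/-- The join of the elements of `S` that are at most `i`. In a linear order this is the largest
such element, or `⊥` if there is none. On `Fin n`, provided `⊥ ∈ S`, the function `floorIn S` is the
weakly increasing Fubini ranking whose set of lucky cars is `S`. -/
def floorIn {ι : Type*} [SemilatticeSup ι] [OrderBot ι] [DecidableLE ι] (S : Finset ι) (i : ι) :
    ι :=
  (S.filter (· ≤ i)).sup id

section SemilatticeSup

variable {ι : Type*} [SemilatticeSup ι] [OrderBot ι] [DecidableLE ι] {S : Finset ι} {i j : ι}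

lemma floorIn_le_iff {a : ι} : floorIn S i ≤ a ↔ ∀ j ∈ S, j ≤ i → j ≤ a := by
  simp [floorIn]

lemma floorIn_le (S : Finset ι) (i : ι) : floorIn S i ≤ i :=
  floorIn_le_iff.mpr fun _ _ => id

lemma le_floorIn_iff (hj : j ∈ S) : j ≤ floorIn S i ↔ j ≤ i :=
  ⟨fun h => h.trans (floorIn_le S i), floorIn_le_iff.mp le_rfl j hj⟩

lemma monotone_floorIn (S : Finset ι) : Monotone (floorIn S) :=
  fun _ _ hik => floorIn_le_iff.mpr fun _ hj hji => (le_floorIn_iff hj).mpr (hji.trans hik)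

end SemilatticeSup

variable {ι : Type*} [LinearOrder ι] [OrderBot ι] {S : Finset ι}

lemma floorIn_mem (hS : ⊥ ∈ S) (i : ι) : floorIn S i ∈ S :=
  Finset.sup_mem (S : Set ι) hS (fun _ hj _ hk => LinearOrder.supClosed (S : Set ι) hj hk) _ id
    fun _ hj => (Finset.mem_filter.mp hj).1

lemma floorIn_eq_self_iff (hS : ⊥ ∈ S) {i : ι} : floorIn S i = i ↔ i ∈ S :=
  ⟨fun h => h ▸ floorIn_mem hS i,
    fun hi => (floorIn_le S i).antisymm ((le_floorIn_iff hi).mpr le_rfl)⟩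

end FloorIn

section Fubini

variable {n : ℕ} {α : Fin n → Fin n}

lemma isFubini_of_apply_lt_apply_iff (h : ∀ i j, α j < α i ↔ j < α i) : IsFubini α := by
  rintro _ ⟨i, rfl⟩
  simp only [h, Finset.filter_gt_eq_Iio, Fin.card_Iio]

lemma IsFubini.apply_lt_apply_iff (hα : IsFubini α) (hmono : Monotone α) (i j : Fin n) :
    α j < α i ↔ j < α i := by
  have hlower : IsLowerSet {k | α k < α i} := (isLowerSet_Iio (α i)).preimage hmono
  have hfilter : (Finset.univ.filter fun k => α k < α i) = Finset.Iio (α i) :=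
    finset_eq_of_isLowerSet_of_card_eq (by simpa using hlower)
      (by simpa using isLowerSet_Iio (α i))
      ((hα (α i) ⟨i, rfl⟩).trans (Fin.card_Iio _).symm)
  simpa using Finset.ext_iff.mp hfilter j

lemma IsFubini.apply_le_self (hα : IsFubini α) (hmono : Monotone α) (i : Fin n) : α i ≤ i :=
  not_lt.mp fun h => lt_irrefl _ ((hα.apply_lt_apply_iff hmono i i).mpr h)

lemma IsFubini.apply_apply (hα : IsFubini α) (hmono : Monotone α) (i : Fin n) :
    α (α i) = α i :=
  (hα.apply_le_self hmono (α i)).antisymm <|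
    not_lt.mp fun h => lt_irrefl _ ((hα.apply_lt_apply_iff hmono i (α i)).mp h)

lemma mem_luckySet {i : Fin n} : i ∈ luckySet α ↔ ∀ j, j < i → α j ≠ α i := by
  simp [luckySet]

lemma bot_mem_luckySet [NeZero n] (α : Fin n → Fin n) : ⊥ ∈ luckySet α :=
  mem_luckySet.mpr fun _ hj => absurd hj not_lt_bot

lemma IsFubini.mem_luckySet_iff_apply_eq_self (hα : IsFubini α) (hmono : Monotone α)
    {i : Fin n} : i ∈ luckySet α ↔ α i = i := by
  rw [mem_luckySet]
  constructor
  · intro hlucky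
    by_contra hne
    exact hlucky (α i) ((hα.apply_le_self hmono i).lt_of_ne hne) (hα.apply_apply hmono i)
  · intro hfix j hji
    exact ((hα.apply_lt_apply_iff hmono i j).mpr (hji.trans_eq hfix.symm)).ne

variable [NeZero n] {S : Finset (Fin n)}

lemma isFubini_floorIn (hS : ⊥ ∈ S) : IsFubini (floorIn S) :=
  isFubini_of_apply_lt_apply_iff fun i _ =>
    lt_iff_lt_of_le_iff_le (le_floorIn_iff (floorIn_mem hS i))

lemma luckySet_floorIn (hS : ⊥ ∈ S) : luckySet (floorIn S) = S := by
  ext i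
  rw [(isFubini_floorIn hS).mem_luckySet_iff_apply_eq_self (monotone_floorIn S),
    floorIn_eq_self_iff hS]

lemma IsFubini.floorIn_luckySet (hα : IsFubini α) (hmono : Monotone α) :
    floorIn (luckySet α) = α := by
  have hfix {j : Fin n} : j ∈ luckySet α ↔ α j = j := hα.mem_luckySet_iff_apply_eq_self hmono
  funext i
  apply le_antisymm
  · exact floorIn_le_iff.mpr fun j hj hji => (hfix.mp hj).ge.trans (hmono hji)
  · exact (le_floorIn_iff (hfix.mpr (hα.apply_apply hmono i))).mpr (hα.apply_le_self hmono i)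

lemma bijOn_luckySet :
    Set.BijOn luckySet {α : Fin n → Fin n | IsFubini α ∧ Monotone α} {S | ⊥ ∈ S} :=
  Set.InvOn.bijOn (f' := floorIn)
    ⟨fun _ hα => hα.1.floorIn_luckySet hα.2, fun _ hS => luckySet_floorIn hS⟩
    (fun α _ => bot_mem_luckySet α) (fun S hS => ⟨isFubini_floorIn hS, monotone_floorIn S⟩)

lemma sum_luckySet_eq_sum_Icc {M : Type*} [AddCommMonoid M] (f : Finset (Fin n) → M) :
    ∑ α ∈ Finset.univ.filter (fun α : Fin n → Fin n => IsFubini α ∧ Monotone α),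
        f (luckySet α) = ∑ S ∈ Finset.Icc {⊥} Finset.univ, f S := by
  have hbij := bijOn_luckySet (n := n)
  refine Finset.sum_nbij luckySet ?_ ?_ ?_ fun _ _ => rfl
  · exact fun α _ => by simpa using bot_mem_luckySet α
  · simpa using hbij.injOn
  · intro S hS
    simpa using hbij.surjOn (show ⊥ ∈ S by simpa using hS)

end Fubini

/-- The total number of lucky cars over all weakly increasing Fubini
rankings with `n` competitors satisfies `2·∑_{α ∈ FR_n^↑} lucky(α) = (n+1)·2^(n−1)`
(equivalently, the expected number of lucky cars is `(n+1)/2`). -/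
theorem total_lucky_weakly_increasing_fubini (n : ℕ) (hn : 1 ≤ n) :
    2 * ∑ α ∈ Finset.univ.filter (fun α : Fin n → Fin n => IsFubini α ∧ Monotone α),
          lucky α
      = (n + 1) * 2 ^ (n - 1) := by
  have : NeZero n := ⟨Nat.one_le_iff_ne_zero.mp hn⟩
  calc 2 * ∑ α ∈ Finset.univ.filter (fun α : Fin n → Fin n => IsFubini α ∧ Monotone α), lucky α
      = 2 * ∑ S ∈ Finset.Icc {(⊥ : Fin n)} Finset.univ, S.card :=
        congrArg (2 * ·) (sum_luckySet_eq_sum_Icc Finset.card)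
    _ = (1 + n) * 2 ^ (n - 1) := by
        rw [two_mul_sum_card_Icc (Finset.subset_univ _), Finset.card_singleton, Finset.card_fin]
    _ = (n + 1) * 2 ^ (n - 1) := by rw [add_comm]
end
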